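/- Let k ≥ 3 and n ≥ 3k·binomial(2k, k). Let F be a (3, 2k)-conditionally intersecting family of k-element subsets of [n] such that every member F of F contains a (k−1)-element subset that is contained in no other member of F, let A, B ∈ F be disjoint, and set U = [n] − (A ∪ B). Then for every integer ℓ with 1 ≤ ℓ and 2ℓ ≤ k+1, one has 2·Σ_{i=0}^{ℓ} |F_i| ≤ Σ_{i=1}^{ℓ} (2·w_i − n_i), where F_i = {F ∈ F : |F ∩ (A ∪ B)| = i}, w_i = binomial(k−1, i−1)·binomial(n−2k, k−i), and n_i is the number of non-perfect (k−i)-element subsets of U. -/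

import Mathlib

/-- A family `F` of finsets is `(d, s)`-conditionally intersecting if there do not exist
`d` distinct members of `F` whose union has size at most `s` and whose intersection is empty. -/
def CondIntersecting {n : ℕ} (d s : ℕ) (F : Finset (Finset (Fin n))) : Prop :=
  ¬ ∃ D ⊆ F, D.card = d ∧ (D.sup id).card ≤ s ∧ D.inf id = ∅

/-- `F(C) = {S - C : S ∈ F, S ∩ U = C}`. -/
def FamC {n : ℕ} (F : Finset (Finset (Fin n))) (U C : Finset (Fin n)) :
    Finset (Finset (Fin n)) :=
  (F.filter (fun S => S ∩ U = C)).image (fun S => S \ C)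

/-- The family of all `m`-element subsets of `A` that contain `v`. -/
def starFam {n : ℕ} (m : ℕ) (A : Finset (Fin n)) (v : Fin n) :
    Finset (Finset (Fin n)) :=
  (A.powersetCard m).filter (fun E => v ∈ E)

/-- A set `C ⊆ U` of size `k - 1` is perfect if it is contained in some member of `F`;
a set `C ⊆ U` of size at most `k - 2` is perfect if `F(C)` is the full star on `A` with
some core `v ∈ A`, or the full star on `B` with some core `v ∈ B`. -/
def PerfectSet {n : ℕ} (k : ℕ) (F : Finset (Finset (Fin n))) (A B U : Finset (Fin n))
    (C : Finset (Fin n)) : Prop :=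
  if C.card = k - 1 then ∃ S ∈ F, C ⊆ S
  else (∃ v ∈ A, FamC F U C = starFam (k - C.card) A v) ∨
       (∃ v ∈ B, FamC F U C = starFam (k - C.card) B v)

open Classical in
/-- `n_i`: the number of non-perfect `(k-i)`-element subsets of `U`. -/
noncomputable def nonPerfectCount {n : ℕ} (k i : ℕ) (F : Finset (Finset (Fin n)))
    (A B U : Finset (Fin n)) : ℕ :=
  ((U.powersetCard (k - i)).filter (fun C => ¬ PerfectSet k F A B U C)).card

open Classical in
/-- `b_i`: the number of `(k-i)`-element subsets of `U` that are non-perfect and are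
contained in no perfect `(k-i+1)`-element subset of `U`. -/
noncomputable def badCount {n : ℕ} (k i : ℕ) (F : Finset (Finset (Fin n)))
    (A B U : Finset (Fin n)) : ℕ :=
  ((U.powersetCard (k - i)).filter (fun C => ¬ PerfectSet k F A B U C ∧
    ∀ D ∈ U.powersetCard (k - i + 1), C ⊆ D → ¬ PerfectSet k F A B U D)).card



open Finset

namespace St16

variable {n : ℕ}

lemma triple {s : ℕ} {F : Finset (Finset (Fin n))} (hci : CondIntersecting 3 s F)
    {S T R : Finset (Fin n)} (hS : S ∈ F) (hT : T ∈ F) (hR : R ∈ F)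
    (h1 : S ≠ T) (h2 : S ≠ R) (h3 : T ≠ R) (W : Finset (Fin n)) (hW : W.card ≤ s)
    (hSW : S ⊆ W) (hTW : T ⊆ W) (hRW : R ⊆ W) :
    ∃ x, x ∈ S ∧ x ∈ T ∧ x ∈ R := by
  by_contra hcon
  push Not at hcon
  apply hci
  refine ⟨{S, T, R}, ?_, ?_, ?_, ?_⟩
  · intro X hX
    simp only [mem_insert, mem_singleton] at hX
    rcases hX with rfl | rfl | rfl <;> assumption
  · rw [card_eq_three]
    exact ⟨S, T, R, h1, h2, h3, rfl⟩
  · refine le_trans (card_le_card ?_) hW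
    have : ({S, T, R} : Finset (Finset (Fin n))).sup id ≤ W := by
      apply Finset.sup_le
      intro X hX
      simp only [mem_insert, mem_singleton] at hX
      rcases hX with rfl | rfl | rfl <;> assumption
    exact this
  · ext x
    simp only [inf_insert, inf_singleton, id, inf_eq_inter, mem_inter, notMem_empty, iff_false]
    rintro ⟨a, b, c⟩
    exact hcon x a b c

/-- the star step -/
lemma star_step {k m : ℕ} {F : Finset (Finset (Fin n))} (hci : CondIntersecting 3 (2 * k) F)
    {A B C D E : Finset (Fin n)} (hA : A ∈ F) (hB : B ∈ F) (hAB : Disjoint A B)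
    (hAk : A.card = k) (hBk : B.card = k)
    (hCD : C ⊆ D) (hcC : C.card + 1 = D.card) (hcD : D.card + m = k) (hm : 1 ≤ m)
    (hmk : 2 * m + 1 ≤ k) (hE : E.card = m + 1) (hEAB : E ⊆ A ∪ B)
    (hDA : Disjoint D A) (hDB : Disjoint D B) (hS : C ∪ E ∈ F) {v : Fin n} (hv : v ∈ A)
    (hstar : ∀ E' ⊆ A, v ∈ E' → E'.card = m → D ∪ E' ∈ F) :
    v ∈ E ∧ E ⊆ A := by
  have hdA : ∀ x, x ∈ D → x ∉ A := fun x hx => Finset.disjoint_left.1 hDA hx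
  have hdB : ∀ x, x ∈ D → x ∉ B := fun x hx => Finset.disjoint_left.1 hDB hx
  have hab : ∀ x, x ∈ A → x ∉ B := fun x hx => Finset.disjoint_left.1 hAB hx
  have hab' : ∀ x, x ∈ E → x ∈ A ∨ x ∈ B := fun x hx => by simpa using hEAB hx
  obtain ⟨d, hd, hdC⟩ : ∃ d ∈ D, d ∉ C := by
    by_contra! h
    have := card_le_card (show D ⊆ C from h)
    omega
  have hdE : d ∉ E := fun h => by
    rcases hab' d h with h | h
    · exact hdA d hd h
    · exact hdB d hd h
  -- distinctness
  have ne1 : ∀ E', C ∪ E ≠ D ∪ E' := fun E' h => by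
    have : d ∈ C ∪ E := h ▸ mem_union_left _ hd
    simp [hdC, hdE] at this
  have ne2 : ∀ E', D ∪ E' ≠ A := fun E' h => hdA d hd (h ▸ mem_union_left _ hd)
  have ne3 : ∀ E', D ∪ E' ≠ B := fun E' h => hdB d hd (h ▸ mem_union_left _ hd)
  have hCne : ∃ c, c ∈ C := by
    have : 0 < C.card := by omega
    exact card_pos.1 this
  obtain ⟨c, hc⟩ := hCne
  have ne4 : C ∪ E ≠ A := fun h => hdA c (hCD hc) (h ▸ mem_union_left _ hc)
  have ne5 : C ∪ E ≠ B := fun h => hdB c (hCD hc) (h ▸ mem_union_left _ hc)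
  -- the B argument
  have argB : ∀ E' ⊆ A, v ∈ E' → E'.card = m → E ∩ A ⊆ E' → False := by
    intro E' hE' hvE' hcE' hsub
    obtain ⟨x, hx1, hx2, hx3⟩ := triple hci hS (hstar E' hE' hvE' hcE') hB (ne1 _) ne5 (ne3 _)
      (D ∪ E' ∪ B) (by
        have := card_union_le (D ∪ E') B
        have := card_union_le D E'
        omega)
      (by
        intro x hx
        rcases mem_union.1 hx with hx | hx
        · simp [hCD hx]
        · rcases hab' x hx with h | h
          · simp [hsub (mem_inter.2 ⟨hx, h⟩)]
          · simp [h])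
      (subset_union_left) (subset_union_right)
    rcases mem_union.1 hx2 with h | h
    · exact hdB x h hx3
    · exact hab x (hE' h) hx3
  have hEc : (E ∩ A).card + (E ∩ B).card = m + 1 := by
    rw [← hE, ← card_union_of_disjoint, ← inter_union_distrib_left, inter_eq_left.2 hEAB]
    exact Disjoint.mono inter_subset_right inter_subset_right hAB
  have hvE : v ∈ E := by
    by_contra hvE
    by_cases hEB : (E ∩ A).card = 0
    · obtain ⟨E', h1, h2, h3⟩ := exists_subsuperset_card_eq
        (s := {v}) (t := A) (n := m) (by simpa using hv) (by simpa using hm) (by omega)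
      refine argB E' h2 (h1 (mem_singleton_self v)) h3 ?_
      rw [card_eq_zero.1 hEB]
      exact empty_subset _
    · have hc1 : (A \ E).card + (E ∩ A).card = k := by
        rw [← hAk, inter_comm]; exact card_sdiff_add_card_inter A E
      have hc2 : (E ∩ A).card ≤ m + 1 := by omega
      obtain ⟨E', h1, h2, h3⟩ := exists_subsuperset_card_eq
        (s := {v}) (t := A \ E) (n := m) (by simp [hv, hvE]) (by simpa using hm) (by omega)
      have hE'A : E' ⊆ A := h2.trans sdiff_subset
      obtain ⟨x, hx1, hx2, hx3⟩ := triple hci hS (hstar E' hE'A (h1 (mem_singleton_self v)) h3) hA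
        (ne1 _) ne4 (ne2 _) (D ∪ (E ∩ B) ∪ A) (by
        have := card_union_le (D ∪ (E ∩ B)) A
        have := card_union_le D (E ∩ B)
        omega)
        (by
          intro x hx
          rcases mem_union.1 hx with hx | hx
          · simp [hCD hx]
          · rcases hab' x hx with h | h
            · simp [h]
            · simp [h, hx])
        (by
          intro x hx
          rcases mem_union.1 hx with hx | hx
          · simp [hx]
          · simp [hE'A hx])
        (subset_union_right)
      rcases mem_union.1 hx1 with h | h
      · exact hdA x (hCD h) hx3
      · rcases mem_union.1 hx2 with h' | h'
        · exact hdA x h' hx3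
        · exact (mem_sdiff.1 (h2 h')).2 h
  refine ⟨hvE, ?_⟩
  by_contra hnA
  have hEB : (E ∩ B).card ≠ 0 := by
    intro h0
    apply hnA
    intro x hx
    rcases hab' x hx with h | h
    · exact h
    · have : x ∈ E ∩ B := mem_inter.2 ⟨hx, h⟩
      rw [card_eq_zero.1 h0] at this
      simp at this
  obtain ⟨E', h1, h2, h3⟩ := exists_subsuperset_card_eq
        (s := E ∩ A) (t := A) (n := m) inter_subset_right (by omega) (by omega)
  exact argB E' h2 (h1 (mem_inter.2 ⟨hvE, hv⟩)) h3 h1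

/-- two extensions of a `(k-1)`-set, one by a point of `A` -/
lemma lvl1 {k : ℕ} (hk : 3 ≤ k) {F : Finset (Finset (Fin n))} (hci : CondIntersecting 3 (2 * k) F)
    {A C S T : Finset (Fin n)} (hA : A ∈ F) (hAk : A.card = k)
    (hcC : C.card + 1 = k) (hCA : Disjoint C A) (hS : S ∈ F) (hT : T ∈ F)
    (hTk : T.card = k) (hCS : C ⊆ S) (hCT : C ⊆ T) {x : Fin n} (hxA : x ∈ A)
    (hSx : S ⊆ insert x C) (hSk : S.card = k) : T = S := by
  have hdA : ∀ x, x ∈ C → x ∉ A := fun x hx => Finset.disjoint_left.1 hCA hx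
  by_contra hne
  obtain ⟨c, hc⟩ : ∃ c, c ∈ C := card_pos.1 (by omega)
  have hTA : T ≠ A := fun h => hdA c hc (h ▸ hCT hc)
  have hSA : S ≠ A := fun h => hdA c hc (h ▸ hCS hc)
  obtain ⟨y, hy1, hy2, hy3⟩ := triple hci hT hS hA hne hTA hSA (T ∪ A)
    (by have := card_union_le T A; omega) subset_union_left
    (by
      intro y hy
      rcases mem_insert.1 (hSx hy) with rfl | h
      · simp [hxA]
      · simp [hCT h]) subset_union_right
  apply hne
  symm
  apply eq_of_subset_of_card_le _ (by omega)
  intro z hz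
  rcases mem_insert.1 (hSx hz) with rfl | h
  · rcases mem_insert.1 (hSx hy2) with rfl | h
    · exact hy1
    · exact absurd hy3 (hdA y h)
  · exact hCT h

/-- level two, superset contained in a member inside `U` -/
lemma lvl2a {k : ℕ} (hk : 3 ≤ k) {F : Finset (Finset (Fin n))}
    (hci : CondIntersecting 3 (2 * k) F)
    {A C E T : Finset (Fin n)} (hA : A ∈ F) (hAk : A.card = k)
    (hcC : C.card + 2 = k) (hT : T ∈ F) (hTk : T.card = k) (hTA : Disjoint T A)
    (hCT : C ⊆ T) (hE : E.card = 2) (hS : C ∪ E ∈ F) : ¬ E ⊆ A := by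
  intro hEA
  have hdA : ∀ x, x ∈ T → x ∉ A := fun x hx => Finset.disjoint_left.1 hTA hx
  obtain ⟨c, hc⟩ : ∃ c, c ∈ C := card_pos.1 (by omega)
  obtain ⟨e, he⟩ : ∃ c, c ∈ E := card_pos.1 (by omega)
  obtain ⟨y, hy1, hy2, hy3⟩ := triple hci hS hT hA
    (fun h => hdA e (h ▸ mem_union_right _ he) (hEA he))
    (fun h => hdA c (hCT hc) (h ▸ mem_union_left _ hc))
    (fun h => hdA c (hCT hc) (h ▸ hCT hc)) (T ∪ A)
    (by have := card_union_le T A; omega)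
    (union_subset (hCT.trans subset_union_left) (hEA.trans subset_union_right))
    subset_union_left subset_union_right
  exact hdA y hy2 hy3

lemma lvl2b {k : ℕ} (hk : 3 ≤ k) {F : Finset (Finset (Fin n))}
    (hci : CondIntersecting 3 (2 * k) F)
    {A B C : Finset (Fin n)} (hA : A ∈ F) (hAk : A.card = k)
    (hB : B ∈ F) (hBk : B.card = k) (hAB : Disjoint A B)
    (hcC : C.card + 2 = k) (hCA : Disjoint C A) (hCB : Disjoint C B) {a b a' b' : Fin n}
    (ha : a ∈ A) (ha' : a' ∈ A) (hb : b ∈ B) (hb' : b' ∈ B)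
    (hS : C ∪ {a, b} ∈ F) (hT : C ∪ {a', b'} ∈ F) : a = a' ∧ b = b' := by
  have hdA : ∀ x, x ∈ C → x ∉ A := fun x hx => Finset.disjoint_left.1 hCA hx
  have hdB : ∀ x, x ∈ C → x ∉ B := fun x hx => Finset.disjoint_left.1 hCB hx
  have hab : ∀ x, x ∈ A → x ∉ B := fun x hx => Finset.disjoint_left.1 hAB hx
  obtain ⟨c, hc⟩ : ∃ c, c ∈ C := card_pos.1 (by omega)
  have key1 : a = a' := by
    by_contra hne
    obtain ⟨y, hy1, hy2, hy3⟩ := triple hci hS hT hA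
      (fun h => by
        have : a ∈ C ∪ {a', b'} := h ▸ (by simp)
        simp only [mem_union, mem_insert, mem_singleton] at this
        rcases this with h | h | h
        · exact hdA a h ha
        · exact hne h
        · exact hab a ha (h ▸ hb'))
      (fun h => hdA c hc (h ▸ mem_union_left _ hc))
      (fun h => hdA c hc (h ▸ mem_union_left _ hc)) (C ∪ {b, b'} ∪ A)
      (by
        have := card_union_le (C ∪ {b, b'}) A
        have := card_union_le C {b, b'}
        have := card_le_two (a := b) (b := b')
        omega)
      (by grind) (by grind) (by grind)
    grind
  refine ⟨key1, ?_⟩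
  subst key1
  by_contra hne
  obtain ⟨y, hy1, hy2, hy3⟩ := triple hci hS hT hB
      (fun h => by
        have : b ∈ C ∪ {a, b'} := h ▸ (by simp)
        simp only [mem_union, mem_insert, mem_singleton] at this
        rcases this with h | h | h
        · exact hdB b h hb
        · exact hab a ha (h ▸ hb)
        · exact hne h)
      (fun h => hdB c hc (h ▸ mem_union_left _ hc))
      (fun h => hdB c hc (h ▸ mem_union_left _ hc)) (C ∪ {a} ∪ B)
      (by
        have := card_union_le (C ∪ {a}) B
        have := card_union_le C {a}
        have := card_singleton a
        omega)
      (by grind) (by grind) (by grind)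
  grind

lemma starFam_card_le {A : Finset (Fin n)} {v : Fin n} (hv : v ∈ A) (i : ℕ) (hi : 1 ≤ i) :
    (starFam i A v).card ≤ (A.card - 1).choose (i - 1) := by
  rw [← card_erase_of_mem hv, ← card_powersetCard]
  apply card_le_card_of_injOn (fun E => E.erase v)
  · intro E hE
    simp only [starFam, coe_filter, mem_powersetCard, Set.mem_ofPred_eq] at hE
    simp only [mem_coe, mem_powersetCard]
    exact ⟨erase_subset_erase _ hE.1.1, by rw [card_erase_of_mem hE.2, hE.1.2]⟩
  · intro E hE E' hE' h
    simp only [starFam, coe_filter, mem_powersetCard, Set.mem_ofPred_eq] at hE hE'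
    have h' : E.erase v = E'.erase v := h
    rw [← insert_erase hE.2, ← insert_erase hE'.2, h']

lemma mem_FamC {F : Finset (Finset (Fin n))} {I C E : Finset (Fin n)}
    (h : E ∈ FamC F (univ \ I) C) : E ⊆ I ∧ C ∪ E ∈ F ∧ Disjoint C E := by
  simp only [FamC, mem_image, mem_filter] at h
  obtain ⟨S, ⟨hS, hC⟩, rfl⟩ := h
  have hCS : C ⊆ S := hC ▸ inter_subset_left
  refine ⟨?_, ?_, disjoint_sdiff⟩
  · intro x hx
    by_contra hxI
    rw [mem_sdiff] at hx
    exact hx.2 (hC ▸ (by simp [hx.1, hxI]))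
  · rwa [union_sdiff_of_subset hCS]

lemma FamC_card (F : Finset (Finset (Fin n))) (U C : Finset (Fin n)) :
    (FamC F U C).card = (F.filter (fun S => S ∩ U = C)).card := by
  unfold FamC
  apply card_image_of_injOn
  intro S hS T hT h
  simp only [coe_filter, Set.mem_ofPred_eq] at hS hT
  have hS' : C ⊆ S := hS.2 ▸ inter_subset_left
  have hT' : C ⊆ T := hT.2 ▸ inter_subset_left
  have h' : S \ C = T \ C := h
  rw [← union_sdiff_of_subset hS', ← union_sdiff_of_subset hT', h']


lemma sub_star {k i : ℕ} {F : Finset (Finset (Fin n))} (hci : CondIntersecting 3 (2 * k) F)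
    (hunif : ∀ S ∈ F, S.card = k)
    {A B C D : Finset (Fin n)} (hA : A ∈ F) (hB : B ∈ F) (hAB : Disjoint A B)
    (hi : 2 ≤ i) (hik : 2 * i ≤ k + 1)
    (hcC : C.card = k - i) (hcD : D.card = k - i + 1) (hCD : C ⊆ D) (hDU : D ⊆ univ \ (A ∪ B))
    {v : Fin n} (hv : v ∈ A)
    (hstar : ∀ E' ⊆ A, v ∈ E' → E'.card = i - 1 → D ∪ E' ∈ F) :
    FamC F (univ \ (A ∪ B)) C ⊆ starFam i A v := by
  intro E hE
  obtain ⟨h1, h2, h3⟩ := mem_FamC hE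
  have hc := hunif _ h2
  rw [card_union_of_disjoint h3] at hc
  have hDA : Disjoint D A := Finset.disjoint_left.2 fun x hx hx' => by
    have := hDU hx
    simp [hx'] at this
  have hDB : Disjoint D B := Finset.disjoint_left.2 fun x hx hx' => by
    have := hDU hx
    simp [hx'] at this
  have := star_step hci (m := i - 1) hA hB hAB (hunif _ hA) (hunif _ hB) hCD (by omega) (by omega)
    (by omega) (by omega) (by omega) h1 hDA hDB h2 hv hstar
  simp only [starFam, mem_filter, mem_powersetCard]
  exact ⟨⟨this.2, by omega⟩, this.1⟩

lemma star_concl {k i : ℕ} (hi : 2 ≤ i) (hik : 2 * i ≤ k + 1) {F : Finset (Finset (Fin n))}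
    {A U C : Finset (Fin n)} (hAk : A.card = k) {v : Fin n} (hv : v ∈ A)
    (hsub : FamC F U C ⊆ starFam i A v) (hne : FamC F U C ≠ starFam i A v) :
    (FamC F U C).card + 1 ≤ (k - 1).choose (i - 1) := by
  have h1 := starFam_card_le hv i (by omega)
  have h2 := card_lt_card (hsub.ssubset_of_ne hne)
  rw [hAk] at h1
  omega

lemma perC {k i : ℕ} (hk : 3 ≤ k) {F : Finset (Finset (Fin n))}
    (hci : CondIntersecting 3 (2 * k) F)
    (hunif : ∀ S ∈ F, S.card = k)
    {A B C D : Finset (Fin n)} (hA : A ∈ F) (hB : B ∈ F) (hAB : Disjoint A B)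
    (hi : 2 ≤ i) (hik : 2 * i ≤ k + 1)
    (hcC : C.card = k - i) (hcD : D.card = k - i + 1) (hCD : C ⊆ D) (hDU : D ⊆ univ \ (A ∪ B))
    (hD : PerfectSet k F A B (univ \ (A ∪ B)) D) (hC : ¬ PerfectSet k F A B (univ \ (A ∪ B)) C) :
    (FamC F (univ \ (A ∪ B)) C).card + 1 ≤ (k - 1).choose (i - 1) := by
  unfold PerfectSet at hC
  rw [if_neg (by omega)] at hC
  push Not at hC
  have hki : k - C.card = i := by omega
  rw [hki] at hC
  have useA : ∀ v ∈ A, (∀ E' ⊆ A, v ∈ E' → E'.card = i - 1 → D ∪ E' ∈ F) →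
      (FamC F (univ \ (A ∪ B)) C).card + 1 ≤ (k - 1).choose (i - 1) := fun v hv hst =>
    star_concl hi hik (hunif _ hA) hv
      (sub_star hci hunif hA hB hAB hi hik hcC hcD hCD hDU hv hst) (hC.1 v hv)
  have useB : ∀ v ∈ B, (∀ E' ⊆ B, v ∈ E' → E'.card = i - 1 → D ∪ E' ∈ F) →
      (FamC F (univ \ (A ∪ B)) C).card + 1 ≤ (k - 1).choose (i - 1) := fun v hv hst => by
    have := sub_star hci hunif hB hA hAB.symm hi hik hcC hcD hCD
      (by rw [union_comm]; exact hDU) hv hst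
    rw [union_comm B A] at this
    exact star_concl hi hik (hunif _ hB) hv this (hC.2 v hv)
  unfold PerfectSet at hD
  split_ifs at hD with hcase
  · -- i = 2
    have hi2 : i = 2 := by omega
    subst hi2
    obtain ⟨T, hT, hDT⟩ := hD
    have hTk := hunif T hT
    obtain ⟨x, hxD, rfl⟩ : ∃ x, x ∉ D ∧ insert x D = T := by
      have : (T \ D).card = 1 := by rw [card_sdiff_of_subset hDT]; omega
      obtain ⟨x, hx⟩ := card_eq_one.1 this
      have hx' : x ∈ T \ D := by simp [hx]
      refine ⟨x, (mem_sdiff.1 hx').2, ?_⟩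
      rw [insert_eq, ← hx, sdiff_union_of_subset hDT]
    have hst : ∀ X : Finset (Fin n), ∀ E' ⊆ X, x ∈ E' → E'.card = 2 - 1 → D ∪ E' ∈ F := by
      intro X E' _ hxE hcE
      obtain ⟨y, rfl⟩ := card_eq_one.1 hcE
      rw [mem_singleton] at hxE
      subst hxE
      rw [union_comm, ← insert_eq]
      exact hT
    by_cases hxA : x ∈ A
    · exact useA x hxA (hst A)
    by_cases hxB : x ∈ B
    · exact useB x hxB (hst B)
    have hDA : Disjoint D A := Finset.disjoint_left.2 fun x hx hx' => by
      have := hDU hx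
      simp [hx'] at this
    have hDB : Disjoint D B := Finset.disjoint_left.2 fun x hx hx' => by
      have := hDU hx
      simp [hx'] at this
    have mixed : ∀ E ∈ FamC F (univ \ (A ∪ B)) C, ∃ a ∈ A, ∃ b ∈ B, E = {a, b} := by
      intro E hE
      obtain ⟨h1, h2, h3⟩ := mem_FamC hE
      have hc := hunif _ h2
      rw [card_union_of_disjoint h3] at hc
      have hE2 : E.card = 2 := by omega
      have nA := lvl2a hk hci hA (hunif _ hA) (by omega) hT hTk
        (by simp [hxA, hDA]) (hCD.trans (subset_insert _ _)) hE2 h2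
      have nB := lvl2a hk hci hB (hunif _ hB) (by omega) hT hTk
        (by simp [hxB, hDB]) (hCD.trans (subset_insert _ _)) hE2 h2
      obtain ⟨a, b, hab, rfl⟩ := card_eq_two.1 hE2
      simp only [insert_subset_iff, singleton_subset_iff, mem_union] at h1 nA nB
      by_cases ha : a ∈ A
      · have hb : b ∈ B := by tauto
        exact ⟨a, ha, b, hb, rfl⟩
      · exact ⟨b, by tauto, a, by tauto, pair_comm a b⟩
    have hle : (FamC F (univ \ (A ∪ B)) C).card ≤ 1 := by
      rw [card_le_one]
      intro E hE E' hE'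
      obtain ⟨a, ha, b, hb, rfl⟩ := mixed E hE
      obtain ⟨a', ha', b', hb', rfl⟩ := mixed E' hE'
      obtain ⟨h1, h2⟩ := lvl2b hk hci hA (hunif _ hA) hB (hunif _ hB) hAB (by omega)
        (hDA.mono_left hCD) (hDB.mono_left hCD) ha ha' hb hb' (mem_FamC hE).2.1 (mem_FamC hE').2.1
      rw [h1, h2]
    have : (k - 1).choose (2 - 1) = k - 1 := by simp
    omega
  · have hkD : k - D.card = i - 1 := by omega
    rw [hkD] at hD
    rcases hD with ⟨v, hv, h⟩ | ⟨v, hv, h⟩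
    · refine useA v hv fun E' h1 h2 h3 => ?_
      have : E' ∈ FamC F (univ \ (A ∪ B)) D := by
        rw [h]; simp only [starFam, mem_filter, mem_powersetCard]; exact ⟨⟨h1, h3⟩, h2⟩
      exact (mem_FamC this).2.1
    · refine useB v hv fun E' h1 h2 h3 => ?_
      have : E' ∈ FamC F (univ \ (A ∪ B)) D := by
        rw [h]; simp only [starFam, mem_filter, mem_powersetCard]; exact ⟨⟨h1, h3⟩, h2⟩
      exact (mem_FamC this).2.1

lemma perC_perfect {k i : ℕ} {F : Finset (Finset (Fin n))}
    (hunif : ∀ S ∈ F, S.card = k)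
    {A B U C : Finset (Fin n)} (hA : A ∈ F) (hB : B ∈ F)
    (hi : 2 ≤ i) (hik : 2 * i ≤ k + 1) (hcC : C.card = k - i)
    (hC : PerfectSet k F A B U C) :
    (FamC F U C).card ≤ (k - 1).choose (i - 1) := by
  unfold PerfectSet at hC
  have hki : k - C.card = i := by omega
  rw [if_neg (by omega), hki] at hC
  rcases hC with ⟨v, hv, h⟩ | ⟨v, hv, h⟩
  · rw [h, ← hunif _ hA]; exact starFam_card_le hv i (by omega)
  · rw [h, ← hunif _ hB]; exact starFam_card_le hv i (by omega)

lemma perC_crude {k i : ℕ} {F : Finset (Finset (Fin n))}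
    (hunif : ∀ S ∈ F, S.card = k)
    {A B C : Finset (Fin n)} (hA : A ∈ F) (hB : B ∈ F) (hAB : Disjoint A B)
    (hik : i ≤ k) (hcC : C.card = k - i) :
    (FamC F (univ \ (A ∪ B)) C).card ≤ (2 * k).choose i := by
  have : (A ∪ B).card = 2 * k := by
    rw [card_union_of_disjoint hAB, hunif _ hA, hunif _ hB]; omega
  rw [← this, ← card_powersetCard]
  apply card_le_card
  intro E hE
  obtain ⟨h1, h2, h3⟩ := mem_FamC hE
  have hc := hunif _ h2
  rw [card_union_of_disjoint h3] at hc
  exact mem_powersetCard.2 ⟨h1, by omega⟩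

lemma inter_card {k : ℕ} {I S : Finset (Fin n)} (hS : S.card = k) :
    (S ∩ I).card + (S ∩ (univ \ I)).card = k := by
  rw [← hS, ← card_inter_add_card_sdiff S I]
  congr 2
  ext x; simp

lemma U_card {k : ℕ} {F : Finset (Finset (Fin n))}
    (hunif : ∀ S ∈ F, S.card = k)
    {A B : Finset (Fin n)} (hA : A ∈ F) (hB : B ∈ F) (hAB : Disjoint A B) :
    (univ \ (A ∪ B)).card = n - 2 * k := by
  rw [card_sdiff_of_subset (subset_univ _), card_union_of_disjoint hAB, hunif _ hA, hunif _ hB,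
    card_univ, Fintype.card_fin]
  omega

lemma Fi_card {k i : ℕ} {F : Finset (Finset (Fin n))}
    (hunif : ∀ S ∈ F, S.card = k) (hik : i ≤ k) (I : Finset (Fin n)) :
    (F.filter (fun S => (S ∩ I).card = i)).card =
      ∑ C ∈ (univ \ I).powersetCard (k - i), (FamC F (univ \ I) C).card := by
  rw [card_eq_sum_card_fiberwise (f := fun S => S ∩ (univ \ I))
    (t := (univ \ I).powersetCard (k - i))]
  · apply sum_congr rfl
    intro C hC
    rw [FamC_card]
    congr 1
    ext S
    simp only [mem_filter]
    constructor
    · rintro ⟨⟨a, _⟩, c⟩; exact ⟨a, c⟩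
    · rintro ⟨a, c⟩
      refine ⟨⟨a, ?_⟩, c⟩
      have h1 := inter_card (I := I) (hunif S a)
      rw [c, (mem_powersetCard.1 hC).2] at h1
      omega
  · intro S hS
    simp only [coe_filter, Set.mem_ofPred_eq] at hS
    have h1 := inter_card (I := I) (hunif S hS.1)
    simp only [mem_coe, mem_powersetCard]
    exact ⟨inter_subset_right, by omega⟩

open Classical in
lemma level_i {k i : ℕ} (hk : 3 ≤ k) {F : Finset (Finset (Fin n))}
    (hci : CondIntersecting 3 (2 * k) F)
    (hunif : ∀ S ∈ F, S.card = k)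
    {A B : Finset (Fin n)} (hA : A ∈ F) (hB : B ∈ F) (hAB : Disjoint A B)
    (hi : 2 ≤ i) (hik : 2 * i ≤ k + 1) :
    (F.filter (fun S => (S ∩ (A ∪ B)).card = i)).card
      + nonPerfectCount k i F A B (univ \ (A ∪ B)) ≤
    (k - 1).choose (i - 1) * (n - 2 * k).choose (k - i) +
      (2 * k).choose i * badCount k i F A B (univ \ (A ∪ B)) := by
  rw [Fi_card hunif (by omega), nonPerfectCount, badCount, card_filter, card_filter, mul_sum,
    ← U_card hunif hA hB hAB, ← card_powersetCard, mul_comm, ← sum_const_nat (fun _ _ => rfl),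
    ← sum_add_distrib, ← sum_add_distrib]
  apply sum_le_sum
  intro C hC
  obtain ⟨hCU, hcC⟩ := mem_powersetCard.1 hC
  by_cases hp : PerfectSet k F A B (univ \ (A ∪ B)) C
  · have := perC_perfect hunif hA hB hi hik hcC hp
    simpa [hp] using this
  · by_cases hb : ∀ D ∈ (univ \ (A ∪ B)).powersetCard (k - i + 1), C ⊆ D →
        ¬ PerfectSet k F A B (univ \ (A ∪ B)) D
    · rw [if_pos hp, if_pos ⟨hp, hb⟩]
      have h1 := perC_crude (i := i) hunif hA hB hAB (by omega) hcC
      have h2 : 0 < (k - 1).choose (i - 1) := Nat.choose_pos (by omega)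
      omega
    · rw [if_pos hp, if_neg (fun h => hb h.2)]
      push Not at hb
      obtain ⟨D, hD, hCD, hDp⟩ := hb
      obtain ⟨hDU, hcD⟩ := mem_powersetCard.1 hD
      have := perC hk hci hunif hA hB hAB hi hik hcC hcD hCD hDU hDp hp
      omega

open Classical in
lemma bad_le {k i : ℕ} (hk : 3 ≤ k) {F : Finset (Finset (Fin n))}
    (hunif : ∀ S ∈ F, S.card = k)
    {A B : Finset (Fin n)} (hA : A ∈ F) (hB : B ∈ F) (hAB : Disjoint A B)
    (hi : 2 ≤ i) (hik : 2 * i ≤ k + 1) :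
    badCount k i F A B (univ \ (A ∪ B)) * (n - 2 * k - (k - i)) ≤
      nonPerfectCount k (i - 1) F A B (univ \ (A ∪ B)) * (k - i + 1) := by
  have hki : k - (i - 1) = k - i + 1 := by omega
  unfold badCount nonPerfectCount
  rw [hki]
  apply card_mul_le_card_mul (fun C D => C ⊆ D)
  · intro C hC
    obtain ⟨hC1, -, hC3⟩ := mem_filter.1 hC
    obtain ⟨hCU, hcC⟩ := mem_powersetCard.1 hC1
    rw [← U_card hunif hA hB hAB, ← hcC, ← card_sdiff_of_subset hCU]
    apply card_le_card_of_injOn (fun x => insert x C)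
    · intro x hx
      obtain ⟨hx1, hx2⟩ := mem_sdiff.1 (mem_coe.1 hx)
      have hm : insert x C ∈ (univ \ (A ∪ B)).powersetCard (k - i + 1) :=
        mem_powersetCard.2 ⟨insert_subset hx1 hCU, by rw [card_insert_of_notMem hx2, hcC]⟩
      rw [mem_coe, mem_bipartiteAbove, hcC, mem_filter]
      exact ⟨⟨hm, hC3 _ hm (subset_insert _ _)⟩, subset_insert _ _⟩
    · intro x hx y hy hxy
      obtain ⟨hx1, hx2⟩ := mem_sdiff.1 (mem_coe.1 hx)
      have h' : insert x C = insert y C := hxy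
      have : x ∈ insert y C := h' ▸ mem_insert_self x C
      exact (mem_insert.1 this).resolve_right hx2
  · intro D hD
    obtain ⟨hD1, -⟩ := mem_filter.1 hD
    obtain ⟨hDU, hcD⟩ := mem_powersetCard.1 hD1
    have : (D.powersetCard (k - i)).card = k - i + 1 := by
      rw [card_powersetCard, hcD, Nat.choose_succ_self_right]
    rw [← this]
    apply card_le_card
    intro C hC
    rw [mem_bipartiteBelow, mem_filter] at hC
    exact mem_powersetCard.2 ⟨hC.2, (mem_powersetCard.1 hC.1.1).2⟩

lemma step {k i : ℕ} (hk : 3 ≤ k) (hn : 3 * k * (2 * k).choose k ≤ n)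
    {F : Finset (Finset (Fin n))}
    (hci : CondIntersecting 3 (2 * k) F)
    (hunif : ∀ S ∈ F, S.card = k)
    {A B : Finset (Fin n)} (hA : A ∈ F) (hB : B ∈ F) (hAB : Disjoint A B)
    (hi : 2 ≤ i) (hik : 2 * i ≤ k + 1) :
    2 * (F.filter (fun S => (S ∩ (A ∪ B)).card = i)).card
      + 2 * nonPerfectCount k i F A B (univ \ (A ∪ B)) ≤
    2 * ((k - 1).choose (i - 1) * (n - 2 * k).choose (k - i)) +
      nonPerfectCount k (i - 1) F A B (univ \ (A ∪ B)) := by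
  have h1 := level_i hk hci hunif hA hB hAB hi hik
  have h2 := bad_le hk hunif hA hB hAB hi hik
  have h3 : (2 * k).choose i ≤ (2 * k).choose k := by
    have := Nat.choose_le_centralBinom i k
    rwa [Nat.centralBinom] at this
  have h5 : 3 ≤ (2 * k).choose k := by
    have h6 : (2 * k).choose 1 ≤ (2 * k).choose k := by
      have := Nat.choose_le_centralBinom 1 k
      rwa [Nat.centralBinom] at this
    rw [Nat.choose_one_right] at h6
    omega
  have h4 : 2 * (2 * k).choose i * (k - i + 1) ≤ n - 2 * k - (k - i) := by
    have e1 : 2 * (2 * k).choose i * (k - i + 1) ≤ 2 * (2 * k).choose k * k :=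
      Nat.mul_le_mul (Nat.mul_le_mul_left _ h3) (by omega)
    have e2 : k * 3 ≤ k * (2 * k).choose k := Nat.mul_le_mul_left _ h5
    have e3 : 2 * (2 * k).choose k * k = 2 * (k * (2 * k).choose k) := by ring
    have e4 : 3 * k * (2 * k).choose k = 3 * (k * (2 * k).choose k) := by ring
    omega
  set b := badCount k i F A B (univ \ (A ∪ B))
  set m := nonPerfectCount k (i - 1) F A B (univ \ (A ∪ B))
  have h6 : 2 * (2 * k).choose i * b ≤ m := by
    apply Nat.le_of_mul_le_mul_right (c := k - i + 1) _ (by omega)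
    calc 2 * (2 * k).choose i * b * (k - i + 1)
        = b * (2 * (2 * k).choose i * (k - i + 1)) := by ring
      _ ≤ b * (n - 2 * k - (k - i)) := Nat.mul_le_mul_left _ h4
      _ ≤ _ := h2
  have e : 2 * (2 * k).choose i * b = 2 * ((2 * k).choose i * b) := by ring
  omega

open Classical in
lemma base {k : ℕ} (hk : 3 ≤ k) {F : Finset (Finset (Fin n))}
    (hci : CondIntersecting 3 (2 * k) F)
    (hunif : ∀ S ∈ F, S.card = k)
    (huniq : ∀ S ∈ F, ∃ G ⊆ S, G.card = k - 1 ∧ ∀ T ∈ F, G ⊆ T → T = S)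
    {A B : Finset (Fin n)} (hA : A ∈ F) (hB : B ∈ F) (hAB : Disjoint A B) :
    (F.filter (fun S => (S ∩ (A ∪ B)).card = 0)).card
      + (F.filter (fun S => (S ∩ (A ∪ B)).card = 1)).card
      + nonPerfectCount k 1 F A B (univ \ (A ∪ B)) ≤ (n - 2 * k).choose (k - 1) := by
  have own : ∀ S, S ∈ F ∧ (S ∩ (A ∪ B)).card ≤ 1 → ∃ G, G ⊆ S ∧ G ⊆ univ \ (A ∪ B) ∧
      G.card = k - 1 ∧ ∀ T ∈ F, G ⊆ T → T = S := by
    rintro S ⟨hS, h⟩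
    have hc := inter_card (I := A ∪ B) (hunif S hS)
    rcases Nat.le_one_iff_eq_zero_or_eq_one.1 h with h | h
    · obtain ⟨G, h1, h2, h3⟩ := huniq S hS
      refine ⟨G, h1, ?_, h2, h3⟩
      intro x hx
      rw [mem_sdiff]
      refine ⟨mem_univ _, fun hx' => ?_⟩
      have : x ∈ S ∩ (A ∪ B) := mem_inter.2 ⟨h1 hx, hx'⟩
      rw [card_eq_zero.1 h] at this
      simp at this
    · refine ⟨S ∩ (univ \ (A ∪ B)), inter_subset_left, inter_subset_right, by omega, ?_⟩
      intro T hT hGT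
      obtain ⟨x, hx⟩ := card_eq_one.1 h
      have hxm : x ∈ S ∩ (A ∪ B) := by simp [hx]
      have hins : S ⊆ insert x (S ∩ (univ \ (A ∪ B))) := by
        intro y hy
        by_cases hyI : y ∈ A ∪ B
        · have : y ∈ S ∩ (A ∪ B) := mem_inter.2 ⟨hy, hyI⟩
          rw [hx, mem_singleton] at this
          simp [this]
        · exact mem_insert_of_mem (mem_inter.2 ⟨hy, mem_sdiff.2 ⟨mem_univ _, hyI⟩⟩)
      rcases mem_union.1 (mem_inter.1 hxm).2 with hxA | hxB
      · refine lvl1 hk hci hA (hunif _ hA) (C := S ∩ (univ \ (A ∪ B))) (by omega) ?_ hS hT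
          (hunif _ hT) inter_subset_left hGT hxA hins (hunif _ hS)
        exact Finset.disjoint_left.2 fun y hy hy' => by simp [hy'] at hy
      · refine lvl1 hk hci hB (hunif _ hB) (C := S ∩ (univ \ (A ∪ B))) (by omega) ?_ hS hT
          (hunif _ hT) inter_subset_left hGT hxB hins (hunif _ hS)
        exact Finset.disjoint_left.2 fun y hy hy' => by simp [hy'] at hy
  choose! G hG1 hG2 hG3 hG4 using own
  have hcount : (F.filter (fun S => (S ∩ (A ∪ B)).card ≤ 1)).card ≤
      (((univ \ (A ∪ B)).powersetCard (k - 1)).filter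
        (fun C => PerfectSet k F A B (univ \ (A ∪ B)) C)).card := by
    apply card_le_card_of_injOn G
    · intro S hS
      have hS' := mem_filter.1 (mem_coe.1 hS)
      rw [mem_coe, mem_filter, mem_powersetCard]
      refine ⟨⟨hG2 S hS', hG3 S hS'⟩, ?_⟩
      unfold PerfectSet
      rw [if_pos (hG3 S hS')]
      exact ⟨S, hS'.1, hG1 S hS'⟩
    · intro S hS T hT h
      have hS' := mem_filter.1 (mem_coe.1 hS)
      have hT' := mem_filter.1 (mem_coe.1 hT)
      exact hG4 T hT' S hS'.1 (h ▸ hG1 S hS')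
  have hsplit : (F.filter (fun S => (S ∩ (A ∪ B)).card ≤ 1)).card =
      (F.filter (fun S => (S ∩ (A ∪ B)).card = 0)).card
      + (F.filter (fun S => (S ∩ (A ∪ B)).card = 1)).card := by
    rw [← card_union_of_disjoint]
    · congr 1
      rw [← filter_or]
      apply filter_congr
      intro S _
      omega
    · apply disjoint_filter.2
      intro S _ h
      omega
  have htot := card_filter_add_card_filter_not (s := (univ \ (A ∪ B)).powersetCard (k - 1))
    (fun C => PerfectSet k F A B (univ \ (A ∪ B)) C)
  rw [card_powersetCard, U_card hunif hA hB hAB] at htot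
  unfold nonPerfectCount
  omega

end St16

theorem stmt16 (n k : ℕ) (hk : 3 ≤ k) (hn : 3 * k * (2 * k).choose k ≤ n)
    (F : Finset (Finset (Fin n))) (hunif : ∀ S ∈ F, S.card = k)
    (hci : CondIntersecting 3 (2 * k) F)
    (huniq : ∀ S ∈ F, ∃ G ⊆ S, G.card = k - 1 ∧ ∀ T ∈ F, G ⊆ T → T = S)
    (A B : Finset (Fin n)) (hA : A ∈ F) (hB : B ∈ F) (hAB : Disjoint A B) :
    ∀ ℓ : ℕ, 1 ≤ ℓ → 2 * ℓ ≤ k + 1 →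
      (2 * ∑ i ∈ Finset.range (ℓ + 1),
          (F.filter (fun S => (S ∩ (A ∪ B)).card = i)).card : ℤ) ≤
        ∑ i ∈ Finset.Icc 1 ℓ,
          ((2 * ((k - 1).choose (i - 1) * (n - 2 * k).choose (k - i)) : ℕ)
            - (nonPerfectCount k i F A B (Finset.univ \ (A ∪ B)) : ℤ)) := by
  intro ℓ h1 h2
  suffices H : (2 * ∑ i ∈ Finset.range (ℓ + 1),
          (F.filter (fun S => (S ∩ (A ∪ B)).card = i)).card : ℤ) ≤
        ∑ i ∈ Finset.Icc 1 ℓ,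
          ((2 * ((k - 1).choose (i - 1) * (n - 2 * k).choose (k - i)) : ℕ)
            - (nonPerfectCount k i F A B (Finset.univ \ (A ∪ B)) : ℤ))
          - (nonPerfectCount k ℓ F A B (Finset.univ \ (A ∪ B)) : ℤ) by
    have : (0 : ℤ) ≤ (nonPerfectCount k ℓ F A B (Finset.univ \ (A ∪ B)) : ℤ) := by positivity
    linarith
  induction ℓ, h1 using Nat.le_induction with
  | base =>
    have hb := St16.base hk hci hunif huniq hA hB hAB
    simp only [Finset.sum_range_succ, Finset.sum_range_zero, Finset.Icc_self,
      Finset.sum_singleton, Nat.sub_self, Nat.choose_zero_right, one_mul]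
    push_cast
    have hz := Int.ofNat_le.2 hb
    push_cast at hz
    linarith
  | succ m hm ih =>
    have ih' := ih (by omega)
    have hs := St16.step hk hn hci hunif hA hB hAB (i := m + 1) (by omega) h2
    rw [Finset.sum_range_succ, Finset.sum_Icc_succ_top (by omega)]
    rw [Nat.add_sub_cancel] at hs ⊢
    push_cast at ih' ⊢
    have hz := Int.ofNat_le.2 hs
    push_cast at hz
    linarith
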